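/- arXiv:2507.11672 — 2 statements merged into one kernel-verified Lean document; each statement's English description precedes it below -/
import Mathlib

section
/- Let M = p^n q^m with p, q distinct primes, let 1 ≤ a < n and 1 ≤ b < m, and assume p > q^b. Let A : ℤ_M → ℕ be a multiset with positive total mass such that the product Φ_{p^n}(X) Φ_{p^{n-1}}(X) ⋯ Φ_{p^{n-a+1}}(X) · Φ_{q^m}(X) Φ_{q^{m-1}}(X) ⋯ Φ_{q^{m-b+1}}(X) · Φ_{pq}(X) divides A(X). Then |A| > p^a q^b. -/
open Polynomial

/-- Mask polynomial of a multiset (weight function) on `ZMod M`: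
`A(X) = ∑_{x ∈ ℤ_M} w(x) · X^{x.val}`. -/
noncomputable def wmaskPoly (M : ℕ) (w : ZMod M → ℕ) : Polynomial ℤ :=
  ∑ i ∈ Finset.range M, C ((w (i : ZMod M)) : ℤ) * X ^ i

/-- Total mass `∑_x w(x)` of a multiset on `ZMod M`. -/
def wmass (M : ℕ) (w : ZMod M → ℕ) : ℕ :=
  ∑ i ∈ Finset.range M, w (i : ZMod M)

/-!
Let `a` and `b` count the factors `Φ_{p^s}` and `Φ_{q^t}` with `s, t ≥ 2`. Modulo `X ^ p - 1` each
such `Φ_{p^s}` is the constant `p`, so the mass of `A` in every residue class modulo `p` is a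
multiple of `p ^ a`; likewise for `q ^ b`. If every class modulo `p` is occupied, the total mass is
at least `p ^ (a + 1)`.

Otherwise some class modulo `p` is empty. Divisibility by `Φ_{pq}` makes the mass on the grid
`ℤ_p × ℤ_q` satisfy `c(x, y) + c(x', y') = c(x, y') + c(x', y)`, and if row `x` vanishes then all
other rows are constant. So the classes modulo `q` have equal mass, and the total mass is divisible
by `q ^ (b + 1)` as well as by `p ^ a`.
-/

section ResidueSum

variable {R G H : Type*}

section AddMonoidWithOne

variable [AddMonoidWithOne G] [DecidableEq G] [AddMonoidWithOne H] [DecidableEq H]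

/-- The sum of the coefficients of a polynomial over the exponents `k` whose image in `G` is `t`.
For `G = ZMod N` this is the mass of a residue class modulo `N`, and for `G = ZMod m × ZMod n` it is
the mass of the intersection of a class modulo `m` with a class modulo `n`. -/
noncomputable def residueSum [Semiring R] (t : G) : R[X] →ₗ[R] R :=
  lsum fun k ↦ if (k : G) = t then LinearMap.id else 0

section Semiring

variable [Semiring R]

lemma residueSum_apply (t : G) (f : R[X]) :
    residueSum t f = ∑ k ∈ f.support, if (k : G) = t then f.coeff k else 0 := by
  rw [residueSum, lsum_apply, sum_def]
  refine Finset.sum_congr rfl fun k _ ↦ ?_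
  split_ifs <;> rfl

lemma residueSum_monomial (t : G) (k : ℕ) (c : R) :
    residueSum t (monomial k c) = if (k : G) = t then c else 0 := by
  rw [residueSum, lsum_apply, sum_monomial_index c]
  · split_ifs <;> rfl
  · exact map_zero _

lemma sum_residueSum [Fintype G] (f : R[X]) : ∑ t : G, residueSum t f = f.eval 1 := by
  induction f using Polynomial.induction_on' with
  | add f g hf hg => simp only [map_add, Finset.sum_add_distrib, hf, hg, eval_add]
  | monomial k c => simp [residueSum_monomial]

lemma sum_residueSum_mk [Fintype G] (y : H) (f : R[X]) :
    ∑ x : G, residueSum (x, y) f = residueSum y f := by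
  induction f using Polynomial.induction_on' with
  | add f g hf hg => simp only [map_add, Finset.sum_add_distrib, hf, hg]
  | monomial k c => simp [residueSum_monomial, Prod.ext_iff, ite_and]

lemma card_mul_dvd_eval_one [Fintype G] {f : R[X]} {d : R}
    (hconst : ∀ t t' : G, residueSum t f = residueSum t' f) (hd : ∀ t : G, d ∣ residueSum t f) :
    Fintype.card G * d ∣ f.eval 1 := by
  have heval : f.eval 1 = Fintype.card G * residueSum (0 : G) f := by
    rw [← sum_residueSum (G := G), Finset.sum_congr rfl fun t _ ↦ hconst t 0, Finset.sum_const,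
      Finset.card_univ, nsmul_eq_mul]
  rw [heval]
  exact mul_dvd_mul_left _ (hd 0)

variable [PartialOrder R] [IsOrderedAddMonoid R] {f : R[X]}

lemma residueSum_nonneg (hf : ∀ k, 0 ≤ f.coeff k) (t : G) : 0 ≤ residueSum t f := by
  rw [residueSum_apply]
  refine Finset.sum_nonneg fun k _ ↦ ?_
  split_ifs
  exacts [hf k, le_rfl]

lemma residueSum_mk_le (hf : ∀ k, 0 ≤ f.coeff k) (x : G) (y : H) :
    residueSum (x, y) f ≤ residueSum x f := by
  rw [residueSum_apply, residueSum_apply]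
  refine Finset.sum_le_sum fun k _ ↦ ?_
  have := hf k
  split_ifs <;> simp_all [Prod.ext_iff]

end Semiring

lemma card_mul_le_eval_one [Fintype G] {f : ℤ[X]} {d : ℤ} (hf : ∀ k, 0 ≤ f.coeff k)
    (hne : ∀ t : G, residueSum t f ≠ 0) (hd : ∀ t : G, d ∣ residueSum t f) :
    Fintype.card G * d ≤ f.eval 1 := by
  have hle (t : G) : d ≤ residueSum t f :=
    Int.le_of_dvd ((residueSum_nonneg hf t).lt_of_ne' (hne t)) (hd t)
  simpa [← sum_residueSum (G := G) f] using
    Finset.card_nsmul_le_sum Finset.univ _ _ fun t _ ↦ hle t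

end AddMonoidWithOne

variable [AddGroupWithOne G] [DecidableEq G]

lemma residueSum_X_pow_mul [Semiring R] (t : G) (s : ℕ) (f : R[X]) :
    residueSum t (X ^ s * f) = residueSum (t - s) f := by
  induction f using Polynomial.induction_on' with
  | add f g hf hg => rw [mul_add, map_add, map_add, hf, hg]
  | monomial k c =>
    simp only [X_pow_mul_monomial, residueSum_monomial, eq_sub_iff_add_eq, Nat.cast_add]

variable [Ring R]

lemma residueSum_X_pow_sub_one_mul (t : G) (s : ℕ) (f : R[X]) :
    residueSum t ((X ^ s - 1) * f) = residueSum (t - s) f - residueSum t f := by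
  rw [sub_mul, map_sub, residueSum_X_pow_mul, one_mul]

lemma residueSum_eq_zero_of_X_pow_sub_one_dvd {N : ℕ} (hN : (N : G) = 0) {f : R[X]}
    (hf : X ^ N - 1 ∣ f) (t : G) : residueSum t f = 0 := by
  obtain ⟨g, rfl⟩ := hf
  rw [residueSum_X_pow_sub_one_mul, hN, sub_zero, sub_self]

end ResidueSum

section Grid

variable {R : Type*} [CommRing R] {m n : ℕ} [NeZero m] [NeZero n]

lemma natCast_zmod_prod_surjective (h : m.Coprime n) :
    Function.Surjective (Nat.cast : ℕ → ZMod m × ZMod n) := fun z ↦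
  ⟨((ZMod.chineseRemainder h).symm z).val, by
    rw [← map_natCast (ZMod.chineseRemainder h), ZMod.natCast_zmod_val,
      RingEquiv.apply_symm_apply]⟩

lemma residueSum_mk_add_residueSum_mk (h : m.Coprime n) {f : R[X]}
    (hf : X ^ (m * n) - 1 ∣ (X ^ m - 1) * (X ^ n - 1) * f) (x x' : ZMod m) (y y' : ZMod n) :
    residueSum (x, y) f + residueSum (x', y') f =
      residueSum (x, y') f + residueSum (x', y) f := by
  obtain ⟨u, hu⟩ := natCast_zmod_prod_surjective h (x - x', 0)
  obtain ⟨v, hv⟩ := natCast_zmod_prod_surjective h (0, y - y')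
  obtain ⟨k, rfl⟩ := (ZMod.natCast_eq_zero_iff u n).1 (congrArg Prod.snd hu)
  obtain ⟨l, rfl⟩ := (ZMod.natCast_eq_zero_iff v m).1 (congrArg Prod.fst hv)
  have hdvd : X ^ (m * n) - 1 ∣ (X ^ (m * l) - 1) * ((X ^ (n * k) - 1) * f) := by
    rw [← mul_assoc]
    exact hf.trans (mul_dvd_mul_right (mul_dvd_mul (pow_one_sub_dvd_pow_mul_sub_one X m l)
      (pow_one_sub_dvd_pow_mul_sub_one X n k)) f)
  have hcast : ((m * n : ℕ) : ZMod m × ZMod n) = 0 := by simp [Prod.ext_iff]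
  have hzero := residueSum_eq_zero_of_X_pow_sub_one_dvd hcast hdvd (x, y)
  simp only [residueSum_X_pow_sub_one_mul, hu, hv, Prod.mk_sub_mk, sub_zero, sub_sub_cancel]
    at hzero
  linear_combination hzero

lemma residueSum_eq_residueSum_of_residueSum_eq_zero [PartialOrder R] [IsOrderedAddMonoid R]
    (h : m.Coprime n) {f : R[X]} (hf : ∀ k, 0 ≤ f.coeff k)
    (hdvd : X ^ (m * n) - 1 ∣ (X ^ m - 1) * (X ^ n - 1) * f) {x : ZMod m}
    (hx : residueSum x f = 0) (y y' : ZMod n) : residueSum y f = residueSum y' f := by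
  have hzero (z : ZMod n) : residueSum (x, z) f = 0 :=
    ((residueSum_mk_le hf x z).trans_eq hx).antisymm (residueSum_nonneg hf _)
  rw [← sum_residueSum_mk (G := ZMod m) y, ← sum_residueSum_mk (G := ZMod m) y']
  refine Finset.sum_congr rfl fun x' _ ↦ ?_
  simpa only [hzero, zero_add] using residueSum_mk_add_residueSum_mk h hdvd x x' y' y

end Grid

section Cyclotomic

variable {R : Type*} [CommRing R] {p q : ℕ}

lemma X_pow_sub_one_mul_cyclotomic_prime_mul_prime (hp : p.Prime) (hq : q.Prime) (hpq : p ≠ q) :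
    (X ^ p - 1) * (X ^ q - 1) * cyclotomic (p * q) R = (X ^ (p * q) - 1) * (X - 1) := by
  have := Fact.mk hq
  have hcyc : cyclotomic q R * (X - 1) = X ^ q - 1 := cyclotomic_prime_mul_X_sub_one R q
  have hexpand : cyclotomic (p * q) R * cyclotomic q R = expand R p (cyclotomic q R) := by
    rw [cyclotomic_expand_eq_cyclotomic_mul hp
      (mt (Nat.prime_dvd_prime_iff_eq hp hq).1 hpq), mul_comm q p]
  calc (X ^ p - 1) * (X ^ q - 1) * cyclotomic (p * q) R
      = expand R p (cyclotomic q R) * (X ^ p - 1) * (X - 1) := by rw [← hcyc, ← hexpand]; ring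
    _ = expand R p (cyclotomic q R * (X - 1)) * (X - 1) := by simp
    _ = (X ^ (p * q) - 1) * (X - 1) := by simp [hcyc, pow_mul]

lemma residueSum_cyclotomic_prime_pow_mul (hp : p.Prime) {s : ℕ} (hs : 2 ≤ s) (t : ZMod p)
    (f : R[X]) : residueSum t (cyclotomic (p ^ s) R * f) = p * residueSum t f := by
  have := Fact.mk hp
  obtain ⟨k, rfl⟩ := Nat.exists_eq_add_of_le' hs
  have hshift (i : ℕ) : residueSum t ((X ^ p ^ (k + 1)) ^ i * f) = residueSum t f := by
    rw [← pow_mul, residueSum_X_pow_mul]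
    simp
  rw [cyclotomic_prime_pow_eq_geom_sum hp, Finset.sum_mul, map_sum]
  simp only [hshift, Finset.sum_const, Finset.card_range, nsmul_eq_mul]

variable {ι : Type*} {S : Finset ι} {s : ι → ℕ} {f : R[X]}

lemma pow_card_dvd_residueSum (hp : p.Prime) (hs : ∀ i ∈ S, 2 ≤ s i)
    (hf : ∏ i ∈ S, cyclotomic (p ^ s i) R ∣ f) (t : ZMod p) :
    (p : R) ^ S.card ∣ residueSum t f := by
  classical
  obtain ⟨g, rfl⟩ := hf
  induction S using Finset.induction_on with
  | empty => simp
  | insert i S hi ih =>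
    rw [Finset.forall_mem_insert] at hs
    rw [Finset.prod_insert hi, Finset.card_insert_of_notMem hi, mul_assoc,
      residueSum_cyclotomic_prime_pow_mul hp hs.1, pow_succ']
    exact mul_dvd_mul_left _ (ih hs.2)

lemma pow_card_dvd_eval_one (hp : p.Prime) (hs : ∀ i ∈ S, 2 ≤ s i)
    (hf : ∏ i ∈ S, cyclotomic (p ^ s i) R ∣ f) : (p : R) ^ S.card ∣ f.eval 1 := by
  have := Fact.mk hp
  rw [← sum_residueSum (G := ZMod p)]
  exact Finset.dvd_sum fun t _ ↦ pow_card_dvd_residueSum hp hs hf t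

end Cyclotomic

section Mask

variable (M : ℕ) (w : ZMod M → ℕ)

lemma coeff_wmaskPoly_nonneg (k : ℕ) : 0 ≤ (wmaskPoly M w).coeff k := by
  simp only [wmaskPoly, finsetSum_coeff, coeff_C_mul_X_pow]
  exact Finset.sum_nonneg fun i _ ↦ by positivity

lemma eval_one_wmaskPoly : (wmaskPoly M w).eval 1 = wmass M w := by
  simp [wmaskPoly, wmass, eval_finsetSum]

end Mask

theorem mass_gt_of_large_p_general {p q : ℕ} (hp : p.Prime) (hq : q.Prime) (hpq : p ≠ q)
    {ι κ : Type*} (S : Finset ι) (T : Finset κ) {s : ι → ℕ} {t : κ → ℕ}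
    (hs : ∀ i ∈ S, 2 ≤ s i) (ht : ∀ j ∈ T, 2 ≤ t j) {f : ℤ[X]} (hf : ∀ k, 0 ≤ f.coeff k)
    (hf1 : 0 < f.eval 1)
    (hdvd : (∏ i ∈ S, cyclotomic (p ^ s i) ℤ) * (∏ j ∈ T, cyclotomic (q ^ t j) ℤ) *
      cyclotomic (p * q) ℤ ∣ f) :
    (p : ℤ) ^ S.card * min (p : ℤ) (q ^ (T.card + 1)) ≤ f.eval 1 := by
  have := Fact.mk hp
  have := Fact.mk hq
  have hcop : p.Coprime q := (Nat.coprime_primes hp hq).2 hpq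
  have hS : ∏ i ∈ S, cyclotomic (p ^ s i) ℤ ∣ f :=
    dvd_of_mul_right_dvd (dvd_of_mul_right_dvd hdvd)
  have hT : ∏ j ∈ T, cyclotomic (q ^ t j) ℤ ∣ f :=
    dvd_of_mul_left_dvd (dvd_of_mul_right_dvd hdvd)
  by_cases hempty : ∃ x : ZMod p, residueSum x f = 0
  · obtain ⟨x, hx⟩ := hempty
    have hgrid : X ^ (p * q) - 1 ∣ (X ^ p - 1) * (X ^ q - 1) * f :=
      (Dvd.intro _ (X_pow_sub_one_mul_cyclotomic_prime_mul_prime hp hq hpq).symm).trans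
        (mul_dvd_mul_left _ (dvd_of_mul_left_dvd hdvd))
    have hqdvd : (q : ℤ) ^ (T.card + 1) ∣ f.eval 1 := by
      simpa only [ZMod.card, ← pow_succ'] using
        card_mul_dvd_eval_one (residueSum_eq_residueSum_of_residueSum_eq_zero hcop hf hgrid hx)
          (pow_card_dvd_residueSum hq ht hT)
    have hpqdvd : (p : ℤ) ^ S.card * q ^ (T.card + 1) ∣ f.eval 1 :=
      (Nat.isCoprime_iff_coprime.2 hcop).pow.mul_dvd (pow_card_dvd_eval_one hp hs hS) hqdvd
    calc (p : ℤ) ^ S.card * min (p : ℤ) (q ^ (T.card + 1))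
        ≤ p ^ S.card * q ^ (T.card + 1) := by gcongr; exact min_le_right _ _
      _ ≤ f.eval 1 := Int.le_of_dvd hf1 hpqdvd
  · calc (p : ℤ) ^ S.card * min (p : ℤ) (q ^ (T.card + 1))
        ≤ p ^ S.card * p := by gcongr; exact min_le_left _ _
      _ = Fintype.card (ZMod p) * p ^ S.card := by rw [ZMod.card, mul_comm]
      _ ≤ f.eval 1 :=
        card_mul_le_eval_one hf (not_exists.1 hempty) (pow_card_dvd_residueSum hp hs hS)

/-- Proposition 7.13: if `p > q^b` and
`Φ_{p^n} ⋯ Φ_{p^{n-a+1}} Φ_{q^m} ⋯ Φ_{q^{m-b+1}} Φ_{pq} ∣ A(X)`,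
then `|A| > p^a q^b`. -/
theorem mass_gt_of_large_p (p q : ℕ) (hp : p.Prime) (hq : q.Prime) (hpq : p ≠ q)
    (n m a b : ℕ) (ha1 : 1 ≤ a) (han : a < n) (hb1 : 1 ≤ b) (hbm : b < m)
    (hlarge : q ^ b < p)
    (w : ZMod (p ^ n * q ^ m) → ℕ) (hw : 0 < wmass (p ^ n * q ^ m) w)
    (hdvd : ((∏ j ∈ Finset.range a, cyclotomic (p ^ (n - j)) ℤ) *
        (∏ j ∈ Finset.range b, cyclotomic (q ^ (m - j)) ℤ) *
        cyclotomic (p * q) ℤ) ∣ wmaskPoly (p ^ n * q ^ m) w) :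
    p ^ a * q ^ b < wmass (p ^ n * q ^ m) w := by
  have hmin : q ^ b < min p (q ^ (b + 1)) := lt_min hlarge (Nat.pow_lt_pow_succ hq.one_lt)
  have hle := mass_gt_of_large_p_general hp hq hpq (Finset.range a) (Finset.range b)
    (by grind) (by grind) (coeff_wmaskPoly_nonneg _ w)
    (by rw [eval_one_wmaskPoly]; exact_mod_cast hw) hdvd
  rw [eval_one_wmaskPoly, Finset.card_range, Finset.card_range] at hle
  exact (Nat.mul_lt_mul_of_pos_left hmin (pow_pos hp.pos a)).trans_le (mod_cast hle)
end

section
/- Let p be a prime and let S = {p^{α_1}, …, p^{α_m}}, where α_1, …, α_m ∈ ℕ are distinct positive integers. Then MIN(S) = FIB(S) = p^m. -/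
open Polynomial

/-- The mask polynomial of a finite set of natural numbers: `A(X) = ∑_{a ∈ A} X^a`. -/
noncomputable def maskPoly (A : Finset ℕ) : Polynomial ℤ := ∑ a ∈ A, X ^ a

/-- The fiber polynomial `F^N_p(X) = 1 + X^{N/p} + ⋯ + X^{(p-1)N/p}`. -/
noncomputable def fiberPoly (N p : ℕ) : Polynomial ℤ :=
  ∑ j ∈ Finset.range p, X ^ (j * (N / p))

/-- A finite set `A ⊆ ℕ` is fibered on scale `N` if some prime `p ∣ N` has
`F^N_p(X) ∣ A(X)`. -/
def IsFibered (A : Finset ℕ) (N : ℕ) : Prop :=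
  ∃ p : ℕ, p.Prime ∧ p ∣ N ∧ fiberPoly N p ∣ maskPoly A

/-- `MIN(S)`: the minimal size of a nonempty finite `A ⊆ ℕ` with `Φ_s ∣ A(X)` for all `s ∈ S`. -/
noncomputable def MINs (S : Finset ℕ) : ℕ :=
  sInf {k | ∃ A : Finset ℕ, A.Nonempty ∧ A.card = k ∧
    ∀ s ∈ S, cyclotomic s ℤ ∣ maskPoly A}

/-- `FIB(S)`: the minimal size of a nonempty finite `A ⊆ ℕ` fibered on each scale `s ∈ S`. -/
noncomputable def FIBs (S : Finset ℕ) : ℕ :=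
  sInf {k | ∃ A : Finset ℕ, A.Nonempty ∧ A.card = k ∧ ∀ s ∈ S, IsFibered A s}

/-!
On a scale `s = p ^ (n + 1)` the only fiber polynomial is `Φ_s` itself, so being fibered on `s`
means that `Φ_s` divides the mask polynomial.

Lower bound: distinct cyclotomic polynomials are coprime, so `∏ s ∈ S, Φ_s` divides `A(X)`;
now put `X = 1`, where `Φ_s` takes the value `p` and `A(X)` the value `|A|`.

Attainment: add the scales one at a time, in any order and for any primes. The set
`F = {0, pⁿ, …, (p - 1) pⁿ}` has mask polynomial `Φ_s`. For a prime `q` larger than `p` and than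
all elements of `A`, the mask polynomial of the dilate `q F` is still divisible by `Φ_s`, and the
sum `A + q F` is direct because distinct elements of `A` are distinct modulo `q`.
-/

section MaskPoly

open scoped Pointwise

theorem eval_one_maskPoly (A : Finset ℕ) : (maskPoly A).eval 1 = A.card := by
  simp [maskPoly, eval_finsetSum]

theorem maskPoly_image_mul_left {q : ℕ} (hq : 0 < q) (A : Finset ℕ) :
    maskPoly (A.image (q * ·)) = expand ℤ q (maskPoly A) := by
  rw [maskPoly, Finset.sum_image (mul_right_injective₀ hq.ne').injOn]
  simp [maskPoly, pow_mul]

theorem maskPoly_add {A B : Finset ℕ}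
    (h : Set.InjOn (fun x : ℕ × ℕ ↦ x.1 + x.2) (A ×ˢ B : Set (ℕ × ℕ))) :
    maskPoly (A + B) = maskPoly A * maskPoly B := by
  rw [← Finset.coe_product] at h
  rw [← Finset.image_add_product, maskPoly, Finset.sum_image h, maskPoly, maskPoly,
    Finset.sum_mul_sum, Finset.sum_product]
  simp only [pow_add]

theorem injOn_add_of_lt_of_dvd {A B : Finset ℕ} {q : ℕ} (hA : ∀ a ∈ A, a < q)
    (hB : ∀ b ∈ B, q ∣ b) :
    Set.InjOn (fun x : ℕ × ℕ ↦ x.1 + x.2) (A ×ˢ B : Set (ℕ × ℕ)) := by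
  rintro ⟨a, b⟩ ⟨ha, hb⟩ ⟨a', b'⟩ ⟨ha', hb'⟩ (hsum : a + b = a' + b')
  have hmod : a ≡ a' [MOD q] :=
    Nat.ModEq.add_right_cancel
      (((hB b hb).modEq_zero_nat).trans ((hB b' hb').modEq_zero_nat).symm) (hsum ▸ rfl)
  obtain rfl : a = a' := hmod.eq_of_lt_of_lt (hA a ha) (hA a' ha')
  rw [Nat.add_left_cancel hsum]

end MaskPoly

section Cyclotomic

theorem prod_cyclotomic_dvd {S : Finset ℕ} {P : ℤ[X]} (h : ∀ s ∈ S, cyclotomic s ℤ ∣ P) :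
    ∏ s ∈ S, cyclotomic s ℤ ∣ P := by
  have hmonic : (∏ s ∈ S, cyclotomic s ℤ).Monic :=
    monic_prod_of_monic _ _ fun s _ ↦ cyclotomic.monic s ℤ
  refine (map_dvd_map (Int.castRingHom ℚ) Int.cast_injective hmonic).1 ?_
  simp only [Polynomial.map_prod, map_cyclotomic]
  refine Finset.prod_dvd_of_coprime (fun s _ t _ hst ↦ cyclotomic.isCoprime_rat hst) fun s hs ↦ ?_
  simpa only [map_cyclotomic] using Polynomial.map_dvd (Int.castRingHom ℚ) (h s hs)

theorem eval_one_cyclotomic_of_isPrimePow {R : Type*} [CommRing R] {s : ℕ} (hs : IsPrimePow s) :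
    (cyclotomic s R).eval 1 = s.minFac := by
  obtain ⟨p, n, hp, rfl⟩ := (isPrimePow_iff_pow_succ s).1 hs
  have : Fact p.Prime := ⟨hp.nat_prime⟩
  rw [eval_one_cyclotomic_prime_pow, hp.nat_prime.pow_minFac n.succ_ne_zero]

theorem cyclotomic_dvd_expand {R : Type*} [CommRing R] {q n : ℕ} (hq : q.Prime) (hqn : ¬q ∣ n) :
    cyclotomic n R ∣ expand R q (cyclotomic n R) := by
  rw [cyclotomic_expand_eq_cyclotomic_mul hq hqn]
  exact dvd_mul_left _ _

theorem fiberPoly_prime_pow {p : ℕ} (hp : p.Prime) (n : ℕ) :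
    fiberPoly (p ^ (n + 1)) p = cyclotomic (p ^ (n + 1)) ℤ := by
  rw [cyclotomic_prime_pow_eq_geom_sum hp, fiberPoly, pow_succ, Nat.mul_div_cancel _ hp.pos]
  simp only [← pow_mul, mul_comm]

theorem maskPoly_image_range_eq_cyclotomic {p : ℕ} (hp : p.Prime) (n : ℕ) :
    maskPoly ((Finset.range p).image (p ^ n * ·)) = cyclotomic (p ^ (n + 1)) ℤ := by
  rw [maskPoly_image_mul_left (pow_pos hp.pos n), cyclotomic_prime_pow_eq_geom_sum hp]
  simp [maskPoly]

end Cyclotomic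

section PrimePow

theorem isFibered_iff_cyclotomic_dvd {s : ℕ} (hs : IsPrimePow s) (A : Finset ℕ) :
    IsFibered A s ↔ cyclotomic s ℤ ∣ maskPoly A := by
  obtain ⟨p, n, hp, rfl⟩ := (isPrimePow_iff_pow_succ s).1 hs
  rw [← fiberPoly_prime_pow hp.nat_prime]
  constructor
  · rintro ⟨q, hq, hqp, hdvd⟩
    rwa [(Nat.prime_dvd_prime_iff_eq hq hp.nat_prime).1 (hq.dvd_of_dvd_pow hqp)] at hdvd
  · exact fun hdvd ↦ ⟨p, hp.nat_prime, dvd_pow_self p n.succ_ne_zero, hdvd⟩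

theorem FIBs_eq_MINs {S : Finset ℕ} (hS : ∀ s ∈ S, IsPrimePow s) : FIBs S = MINs S := by
  have hiff (A : Finset ℕ) :
      (∀ s ∈ S, IsFibered A s) ↔ ∀ s ∈ S, cyclotomic s ℤ ∣ maskPoly A :=
    forall₂_congr fun s hs ↦ isFibered_iff_cyclotomic_dvd (hS s hs) A
  simp only [FIBs, MINs, hiff]

theorem prod_minFac_dvd_card {S A : Finset ℕ} (hS : ∀ s ∈ S, IsPrimePow s)
    (hA : ∀ s ∈ S, cyclotomic s ℤ ∣ maskPoly A) : ∏ s ∈ S, s.minFac ∣ A.card := by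
  have hdvd := eval_dvd (x := 1) (prod_cyclotomic_dvd hA)
  rw [eval_prod, Finset.prod_congr rfl fun s hs ↦ eval_one_cyclotomic_of_isPrimePow (hS s hs),
    eval_one_maskPoly] at hdvd
  exact_mod_cast hdvd

open scoped Pointwise in
theorem exists_mul_cyclotomic_dvd_maskPoly (A : Finset ℕ) {s : ℕ} (hs : IsPrimePow s) :
    ∃ B : Finset ℕ, maskPoly A * cyclotomic s ℤ ∣ maskPoly B ∧ B.card = A.card * s.minFac := by
  obtain ⟨p, n, hp, rfl⟩ := (isPrimePow_iff_pow_succ s).1 hs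
  obtain ⟨q, hq_gt, hq⟩ := Nat.exists_infinite_primes (p + A.sup id + 1)
  have hA_lt : ∀ a ∈ A, a < q := fun a ha ↦ by
    have : a ≤ A.sup id := Finset.le_sup (f := id) ha
    omega
  have hq_not_dvd : ¬q ∣ p ^ (n + 1) := fun h ↦ by
    have := Nat.le_of_dvd hp.nat_prime.pos (hq.dvd_of_dvd_pow h)
    omega
  let F := (Finset.range p).image (p ^ n * ·)
  have hmask : maskPoly (A + F.image (q * ·)) =
      maskPoly A * expand ℤ q (cyclotomic (p ^ (n + 1)) ℤ) := by
    rw [maskPoly_add (injOn_add_of_lt_of_dvd hA_lt (by simp [F])),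
      maskPoly_image_mul_left hq.pos, maskPoly_image_range_eq_cyclotomic hp.nat_prime]
  refine ⟨A + F.image (q * ·), ?_, ?_⟩
  · rw [hmask]
    exact mul_dvd_mul_left _ (cyclotomic_dvd_expand hq hq_not_dvd)
  · have heval := congrArg (eval 1) hmask
    rw [eval_mul, expand_eval, one_pow, eval_one_cyclotomic_of_isPrimePow hs,
      eval_one_maskPoly, eval_one_maskPoly] at heval
    exact_mod_cast heval

theorem exists_prod_cyclotomic_dvd_maskPoly {S : Finset ℕ} (hS : ∀ s ∈ S, IsPrimePow s) :
    ∃ A : Finset ℕ, ∏ s ∈ S, cyclotomic s ℤ ∣ maskPoly A ∧ A.card = ∏ s ∈ S, s.minFac := by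
  induction S using Finset.induction_on with
  | empty => exact ⟨{0}, by simp⟩
  | insert s S hs ih =>
    obtain ⟨hs_pow, hS_pow⟩ := (Finset.forall_mem_insert ..).1 hS
    obtain ⟨A, hA_dvd, hA_card⟩ := ih hS_pow
    obtain ⟨B, hB_dvd, hB_card⟩ := exists_mul_cyclotomic_dvd_maskPoly A hs_pow
    refine ⟨B, ?_, by rw [hB_card, hA_card, Finset.prod_insert hs, mul_comm]⟩
    rw [Finset.prod_insert hs, mul_comm]
    exact (mul_dvd_mul_right hA_dvd _).trans hB_dvd

theorem MINs_eq_prod_minFac {S : Finset ℕ} (hS : ∀ s ∈ S, IsPrimePow s) :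
    MINs S = ∏ s ∈ S, s.minFac := by
  obtain ⟨A, hA_dvd, hA_card⟩ := exists_prod_cyclotomic_dvd_maskPoly hS
  have hA_pos : 0 < A.card := hA_card ▸ Finset.prod_pos fun s _ ↦ s.minFac_pos
  refine IsLeast.csInf_eq ⟨⟨A, Finset.card_pos.1 hA_pos, hA_card, fun s hs ↦ ?_⟩, ?_⟩
  · exact (Finset.dvd_prod_of_mem (cyclotomic · ℤ) hs).trans hA_dvd
  · rintro _ ⟨B, hB, rfl, hB_dvd⟩
    exact Nat.le_of_dvd hB.card_pos (prod_minFac_dvd_card hS hB_dvd)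

theorem prod_minFac_image_prime_pow {ι : Type*} [Fintype ι] {p : ℕ} (hp : p.Prime) {α : ι → ℕ}
    (hinj : Function.Injective α) (hα : ∀ i, α i ≠ 0) :
    ∏ s ∈ Finset.univ.image (fun i ↦ p ^ α i), s.minFac = p ^ Fintype.card ι := by
  have hpow_inj : Function.Injective fun i ↦ p ^ α i :=
    (Nat.pow_right_injective hp.two_le).comp hinj
  rw [Finset.prod_image hpow_inj.injOn]
  simp [hp.pow_minFac (hα _)]

end PrimePow

theorem min_eq_fib_prime_powers_general (S : Finset ℕ) (hS : ∀ s ∈ S, IsPrimePow s) :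
    MINs S = ∏ s ∈ S, s.minFac ∧ FIBs S = ∏ s ∈ S, s.minFac :=
  ⟨MINs_eq_prod_minFac hS, (FIBs_eq_MINs hS).trans (MINs_eq_prod_minFac hS)⟩

/-- Lemma 1.2: for a prime `p` and `S = {p^{α_1}, …, p^{α_m}}` with distinct positive
exponents, `MIN(S) = FIB(S) = p^m`. -/
theorem min_eq_fib_prime_powers (p : ℕ) (hp : p.Prime) (m : ℕ) (hm : 0 < m)
    (α : Fin m → ℕ) (hinj : Function.Injective α) (hpos : ∀ i, 1 ≤ α i) :
    MINs (Finset.image (fun i => p ^ α i) Finset.univ) = p ^ m ∧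
    FIBs (Finset.image (fun i => p ^ α i) Finset.univ) = p ^ m := by
  have hα (i : Fin m) : α i ≠ 0 := Nat.one_le_iff_ne_zero.1 (hpos i)
  have hprod := prod_minFac_image_prime_pow hp hinj hα
  rw [Fintype.card_fin] at hprod
  rw [← hprod]
  exact min_eq_fib_prime_powers_general _ (by simpa using fun i ↦ hp.isPrimePow.pow (hα i))
end
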